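/- arXiv:2605.14732 — 2 statements merged into one kernel-verified Lean document; each statement's English description precedes it below -/
import Mathlib

section
/- Let Ω be a nonempty open subset of ℝ², ρ a C¹ moment weight function on Ω satisfying the Pearson equation div(ρΦ) = ρ(ψ₁,ψ₂) on Ω, and let u be a C¹ function on Ω with u ∈ L²(Ω,ρ) and ∇u ∈ L²(Ω,ρΦ). Then for every pair v = (v₁,v₂) of real polynomials in x₁,x₂, the function div(u ρΦ v) is integrable on Ω and ∫_Ω |div(u ρΦ v)| dx₁dx₂ ≤ C ‖u‖_{2,ρ} + ‖∇u‖_{2,ρΦ} ‖v‖_{2,ρΦ}, where C = (∫_Ω K² ρ dx₁dx₂)^{1/2} with K = ψ₁v₁ + ψ₂v₂ + φ_{11}∂_{x₁}v₁ + φ_{21}∂_{x₂}v₁ + φ_{12}∂_{x₁}v₂ + φ_{22}∂_{x₂}v₂. -/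
open MeasureTheory Filter

noncomputable section

abbrev Poly2 := MvPolynomial (Fin 2) ℝ

/-- Evaluation of a two-variable real polynomial at a point of `ℝ × ℝ`. -/
def pev (p : Poly2) (x : ℝ × ℝ) : ℝ := MvPolynomial.eval ![x.1, x.2] p

/-- `uᵗ Φ v` where `Φ` is the matrix with polynomial entries `p11 p12 p21 p22`. -/
def bilPhi (p11 p12 p21 p22 : Poly2) (x u v : ℝ × ℝ) : ℝ :=
  u.1 * (pev p11 x * v.1 + pev p12 x * v.2) + u.2 * (pev p21 x * v.1 + pev p22 x * v.2)

/-- The (classical) gradient of a two-variable polynomial. -/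
def polyGrad (p : Poly2) (x : ℝ × ℝ) : ℝ × ℝ :=
  (pev (MvPolynomial.pderiv (0 : Fin 2) p) x, pev (MvPolynomial.pderiv (1 : Fin 2) p) x)

/-- `ρ` is a weight function on `Ω`. -/
def IsWeight (Ω : Set (ℝ × ℝ)) (ρ : ℝ × ℝ → ℝ) : Prop :=
  Measurable ρ ∧ (∀ᵐ x ∂(volume.restrict Ω), 0 < ρ x) ∧ IntegrableOn ρ Ω

/-- `ρ` is a moment weight function on `Ω`. -/
def IsMomentWeight (Ω : Set (ℝ × ℝ)) (ρ : ℝ × ℝ → ℝ) : Prop :=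
  Measurable ρ ∧ (∀ᵐ x ∂(volume.restrict Ω), 0 < ρ x) ∧
    ∀ m n : ℕ, IntegrableOn (fun x : ℝ × ℝ => |x.1| ^ m * |x.2| ^ n * ρ x) Ω

/-- `Φ` is symmetric and positive definite at every point of `Ω`. -/
def SymPosDef (Ω : Set (ℝ × ℝ)) (p11 p12 p21 p22 : Poly2) : Prop :=
  p12 = p21 ∧ ∀ x ∈ Ω, ∀ ζ : ℝ × ℝ, ζ ≠ 0 → 0 < bilPhi p11 p12 p21 p22 x ζ ζ

/-- `Φ` is symmetric, has entries of degree at most 2, and is positive definite on `Ω`. -/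
def GoodPhi (Ω : Set (ℝ × ℝ)) (p11 p12 p21 p22 : Poly2) : Prop :=
  SymPosDef Ω p11 p12 p21 p22 ∧ p11.totalDegree ≤ 2 ∧ p12.totalDegree ≤ 2 ∧
    p21.totalDegree ≤ 2 ∧ p22.totalDegree ≤ 2

/-- The Pearson equation `div(ρΦ) = ρ(ψ₁,ψ₂)` with explicit degree-one polynomials
`ψⱼ(x) = d_{j1} x₁ + d_{j2} x₂ + e_j` having linearly independent linear parts. -/
def PearsonWith (Ω : Set (ℝ × ℝ)) (ρ : ℝ × ℝ → ℝ) (p11 p12 p21 p22 : Poly2)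
    (d11 d12 d21 d22 e1 e2 : ℝ) : Prop :=
  ContDiffOn ℝ 1 ρ Ω ∧ d11 * d22 - d12 * d21 ≠ 0 ∧
    (∀ x ∈ Ω,
      fderiv ℝ (fun y => ρ y * pev p11 y) x (1, 0) +
        fderiv ℝ (fun y => ρ y * pev p21 y) x (0, 1) = ρ x * (d11 * x.1 + d12 * x.2 + e1)) ∧
    (∀ x ∈ Ω,
      fderiv ℝ (fun y => ρ y * pev p12 y) x (1, 0) +
        fderiv ℝ (fun y => ρ y * pev p22 y) x (0, 1) = ρ x * (d21 * x.1 + d22 * x.2 + e2))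

/-- The Pearson equation `div(ρΦ) = ρ(ψ₁,ψ₂)` for some admissible `ψ₁, ψ₂`. -/
def Pearson (Ω : Set (ℝ × ℝ)) (ρ : ℝ × ℝ → ℝ) (p11 p12 p21 p22 : Poly2) : Prop :=
  ∃ d11 d12 d21 d22 e1 e2 : ℝ, PearsonWith Ω ρ p11 p12 p21 p22 d11 d12 d21 d22 e1 e2

/-- `div(ρΦv)` for a pair of polynomials `v = (v1, v2)`. -/
def divRhoPhi (ρ : ℝ × ℝ → ℝ) (p11 p12 p21 p22 v1 v2 : Poly2) (x : ℝ × ℝ) : ℝ :=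
  fderiv ℝ (fun y => ρ y * (pev p11 y * pev v1 y + pev p12 y * pev v2 y)) x (1, 0) +
    fderiv ℝ (fun y => ρ y * (pev p21 y * pev v1 y + pev p22 y * pev v2 y)) x (0, 1)

/-- Membership in `L²(Ω, ρ)`. -/
def MemL2 (Ω : Set (ℝ × ℝ)) (ρ : ℝ × ℝ → ℝ) (u : ℝ × ℝ → ℝ) : Prop :=
  Measurable u ∧ IntegrableOn (fun x => u x ^ 2 * ρ x) Ω

/-- Membership in the matrix-weighted Lebesgue space `L²(Ω, ρΦ)`. -/
def MemL2M (Ω : Set (ℝ × ℝ)) (ρ : ℝ × ℝ → ℝ) (p11 p12 p21 p22 : Poly2)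
    (w : ℝ × ℝ → ℝ × ℝ) : Prop :=
  Measurable w ∧ IntegrableOn (fun x => ρ x * bilPhi p11 p12 p21 p22 x (w x) (w x)) Ω

/-- `h` is a weak gradient of `u`. -/
def IsWeakGrad (Ω : Set (ℝ × ℝ)) (ρ : ℝ × ℝ → ℝ) (p11 p12 p21 p22 : Poly2)
    (u : ℝ × ℝ → ℝ) (h : ℝ × ℝ → ℝ × ℝ) : Prop :=
  MemL2M Ω ρ p11 p12 p21 p22 h ∧
    ∀ v1 v2 : Poly2,
      ∫ x in Ω, u x * divRhoPhi ρ p11 p12 p21 p22 v1 v2 x =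
        - ∫ x in Ω, ρ x * bilPhi p11 p12 p21 p22 x (h x) (pev v1 x, pev v2 x)

/-- Membership in `W(Ω, ρ, ρΦ)`, the closure of the polynomials in `W^{1,2}(Ω, ρ, ρΦ)`,
for a function `u` with weak gradient `g`. -/
def MemW (Ω : Set (ℝ × ℝ)) (ρ : ℝ × ℝ → ℝ) (p11 p12 p21 p22 : Poly2)
    (u : ℝ × ℝ → ℝ) (g : ℝ × ℝ → ℝ × ℝ) : Prop :=
  MemL2 Ω ρ u ∧ IsWeakGrad Ω ρ p11 p12 p21 p22 u g ∧
    ∀ ε : ℝ, 0 < ε → ∃ q : Poly2,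
      (∫ x in Ω, (u x - pev q x) ^ 2 * ρ x) +
        (∫ x in Ω, ρ x * bilPhi p11 p12 p21 p22 x (g x - polyGrad q x) (g x - polyGrad q x))
          < ε ^ 2

/-- The polynomial function
`K = ψ₁v₁ + ψ₂v₂ + φ₁₁∂₁v₁ + φ₂₁∂₂v₁ + φ₁₂∂₁v₂ + φ₂₂∂₂v₂`. -/
def Kfun (p11 p12 p21 p22 v1 v2 : Poly2) (d11 d12 d21 d22 e1 e2 : ℝ) (x : ℝ × ℝ) : ℝ :=
  (d11 * x.1 + d12 * x.2 + e1) * pev v1 x + (d21 * x.1 + d22 * x.2 + e2) * pev v2 x +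
    pev p11 x * pev (MvPolynomial.pderiv (0 : Fin 2) v1) x +
    pev p21 x * pev (MvPolynomial.pderiv (1 : Fin 2) v1) x +
    pev p12 x * pev (MvPolynomial.pderiv (0 : Fin 2) v2) x +
    pev p22 x * pev (MvPolynomial.pderiv (1 : Fin 2) v2) x

/-- `div(u ρ Φ v)` for a scalar function `u` and a polynomial pair `v`. -/
def divURhoPhi (ρ u : ℝ × ℝ → ℝ) (p11 p12 p21 p22 v1 v2 : Poly2) (x : ℝ × ℝ) : ℝ :=
  fderiv ℝ (fun y => u y * (ρ y * (pev p11 y * pev v1 y + pev p12 y * pev v2 y))) x (1, 0) +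
    fderiv ℝ (fun y => u y * (ρ y * (pev p21 y * pev v1 y + pev p22 y * pev v2 y))) x (0, 1)

/-- The classical gradient of a `C¹` function. -/
def gradF (u : ℝ × ℝ → ℝ) (x : ℝ × ℝ) : ℝ × ℝ :=
  (fderiv ℝ u x (1, 0), fderiv ℝ u x (0, 1))


theorem pev_hasFDerivAt (p : Poly2) (x : ℝ × ℝ) :
    HasFDerivAt (pev p)
      (pev (MvPolynomial.pderiv (0 : Fin 2) p) x • ContinuousLinearMap.fst ℝ ℝ ℝ +
        pev (MvPolynomial.pderiv (1 : Fin 2) p) x • ContinuousLinearMap.snd ℝ ℝ ℝ) x := by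
  induction p using MvPolynomial.induction_on with
  | C a =>
    have : pev (MvPolynomial.C a) = fun _ => a := by funext y; simp [pev]
    rw [this]
    convert hasFDerivAt_const a x using 1
    simp [pev]
  | add p q hp hq =>
    have : pev (p + q) = fun y => pev p y + pev q y := by funext y; simp [pev]
    rw [this]
    refine (hp.add hq).congr_fderiv ?_
    ext <;> simp [pev]
  | mul_X p i hp =>
    have hX : HasFDerivAt (pev (MvPolynomial.X i))
      (pev (MvPolynomial.pderiv (0 : Fin 2) (MvPolynomial.X i)) x • ContinuousLinearMap.fst ℝ ℝ ℝ +
        pev (MvPolynomial.pderiv (1 : Fin 2) (MvPolynomial.X i)) x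
          • ContinuousLinearMap.snd ℝ ℝ ℝ) x := by
      fin_cases i
      · have : pev (MvPolynomial.X (0 : Fin 2)) = Prod.fst := by funext y; simp [pev]
        have h := hasFDerivAt_fst (𝕜 := ℝ) (p := x)
        simp only [Fin.zero_eta]
        rw [this]
        refine h.congr_fderiv ?_
        ext <;> simp [pev, MvPolynomial.pderiv_X]
      · have : pev (MvPolynomial.X (1 : Fin 2)) = Prod.snd := by funext y; simp [pev]
        have h := hasFDerivAt_snd (𝕜 := ℝ) (p := x)
        simp only [Fin.mk_one]
        rw [this]
        refine h.congr_fderiv ?_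
        ext <;> simp [pev, MvPolynomial.pderiv_X]
    have : pev (p * MvPolynomial.X i) = fun y => pev p y * pev (MvPolynomial.X i) y := by
      funext y; simp [pev]
    rw [this]
    refine (hp.mul hX).congr_fderiv ?_
    ext <;> simp [pev] <;> ring

theorem pev_measurable (p : Poly2) : Measurable (pev p) :=
  (continuous_iff_continuousAt.2 fun x => (pev_hasFDerivAt p x).continuousAt).measurable

theorem pev_integrable (Ω : Set (ℝ × ℝ)) (ρ : ℝ × ℝ → ℝ) (hρ : IsMomentWeight Ω ρ) (p : Poly2) :
    IntegrableOn (fun x => pev p x * ρ x) Ω := by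
  induction p using MvPolynomial.induction_on' with
  | monomial s a =>
    have h := ((hρ.2.2 (s 0) (s 1)).const_mul |a|)
    refine Integrable.mono h (((pev_measurable _).mul hρ.1).aestronglyMeasurable) ?_
    refine Eventually.of_forall fun x => ?_
    simp [pev, MvPolynomial.eval_monomial, Finsupp.prod_fintype, mul_assoc]
  | add p q hp hq =>
    refine (Integrable.add hp hq).congr (Eventually.of_forall fun x => ?_)
    simp [pev, add_mul]

theorem cs_aux {α : Type*} [MeasurableSpace α] (μ : Measure α) (f a b : α → ℝ)
    (hf : AEStronglyMeasurable f μ) (ha : Integrable a μ) (hb : Integrable b μ)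
    (ha0 : 0 ≤ᵐ[μ] a) (hb0 : 0 ≤ᵐ[μ] b) (h : ∀ᵐ x ∂μ, f x ^ 2 ≤ a x * b x) :
    Integrable f μ ∧ ∫ x, |f x| ∂μ ≤ Real.sqrt (∫ x, a x ∂μ) * Real.sqrt (∫ x, b x ∂μ) := by
  have key : ∀ c : α → ℝ, Integrable c μ → 0 ≤ᵐ[μ] c → MemLp (fun x => Real.sqrt (c x)) 2 μ := by
    intro c hc hc0
    rw [memLp_two_iff_integrable_sq (Real.continuous_sqrt.comp_aestronglyMeasurable hc.1)]
    refine hc.congr ?_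
    filter_upwards [hc0] with x hx
    rw [Real.sq_sqrt hx]
  have keyI : ∀ c : α → ℝ, 0 ≤ᵐ[μ] c → ∫ x, Real.sqrt (c x) ^ (2:ℝ) ∂μ = ∫ x, c x ∂μ := by
    intro c hc0
    refine integral_congr_ae ?_
    filter_upwards [hc0] with x hx
    simp [Real.sq_sqrt hx]
  have hA := key a ha ha0
  have hB := key b hb hb0
  have hI : Integrable (fun x => Real.sqrt (a x) * Real.sqrt (b x)) μ := hA.integrable_mul hB
  have hle : ∀ᵐ x ∂μ, |f x| ≤ Real.sqrt (a x) * Real.sqrt (b x) := by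
    filter_upwards [h, ha0] with x hx hax
    rw [← Real.sqrt_mul hax]
    exact Real.abs_le_sqrt hx
  have hfI : Integrable f μ := by
    refine hI.mono' hf ?_
    simpa using hle
  refine ⟨hfI, (integral_mono_ae hfI.abs hI hle).trans ?_⟩
  have := integral_mul_le_Lp_mul_Lq_of_nonneg (μ := μ) (f := fun x => Real.sqrt (a x))
    (g := fun x => Real.sqrt (b x)) Real.HolderConjugate.two_two
    (Eventually.of_forall fun _ => Real.sqrt_nonneg _)
    (Eventually.of_forall fun _ => Real.sqrt_nonneg _) (by simpa using hA) (by simpa using hB)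
  rw [keyI a ha0, keyI b hb0] at this
  simpa [Real.sqrt_eq_rpow] using this

theorem div_formula (Ω : Set (ℝ × ℝ)) (hΩopen : IsOpen Ω)
    (ρ : ℝ × ℝ → ℝ) (p11 p12 p21 p22 : Poly2) (d11 d12 d21 d22 e1 e2 : ℝ)
    (hP : PearsonWith Ω ρ p11 p12 p21 p22 d11 d12 d21 d22 e1 e2)
    (u : ℝ × ℝ → ℝ) (huC1 : ContDiffOn ℝ 1 u Ω) (v1 v2 : Poly2) (x : ℝ × ℝ) (hx : x ∈ Ω) :
    divURhoPhi ρ u p11 p12 p21 p22 v1 v2 x =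
      Kfun p11 p12 p21 p22 v1 v2 d11 d12 d21 d22 e1 e2 x * u x * ρ x +
      ρ x * bilPhi p11 p12 p21 p22 x (gradF u x) (pev v1 x, pev v2 x) := by
  obtain ⟨hρC, -, h1, h2⟩ := hP
  have hu := ((huC1.differentiableOn one_ne_zero).differentiableAt (hΩopen.mem_nhds hx)).hasFDerivAt
  have hr := ((hρC.differentiableOn one_ne_zero).differentiableAt (hΩopen.mem_nhds hx)).hasFDerivAt
  specialize h1 x hx
  specialize h2 x hx
  have e := fun p => pev_hasFDerivAt p x
  rw [(hr.fun_mul (e p11)).fderiv, (hr.fun_mul (e p21)).fderiv] at h1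
  rw [(hr.fun_mul (e p12)).fderiv, (hr.fun_mul (e p22)).fderiv] at h2
  unfold divURhoPhi
  rw [(hu.fun_mul (hr.fun_mul (((e p11).fun_mul (e v1)).fun_add ((e p12).fun_mul (e v2))))).fderiv,
    (hu.fun_mul (hr.fun_mul (((e p21).fun_mul (e v1)).fun_add ((e p22).fun_mul (e v2))))).fderiv]
  simp at h1 h2 ⊢
  simp only [Kfun, bilPhi, gradF]
  linear_combination u x * pev v1 x * h1 + u x * pev v2 x * h2

/-- For `u` of class `C¹` with `u ∈ L²(Ω,ρ)` and `∇u ∈ L²(Ω,ρΦ)`,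
`div(u ρΦ v)` is integrable on `Ω` and
`∫_Ω |div(u ρΦ v)| ≤ C ‖u‖_{2,ρ} + ‖∇u‖_{2,ρΦ} ‖v‖_{2,ρΦ}`. -/
theorem divURhoPhi_integrable_and_bound (Ω : Set (ℝ × ℝ)) (hΩopen : IsOpen Ω)
    (hΩne : Ω.Nonempty)
    (ρ : ℝ × ℝ → ℝ) (hρ : IsMomentWeight Ω ρ)
    (p11 p12 p21 p22 : Poly2) (hΦ : GoodPhi Ω p11 p12 p21 p22)
    (d11 d12 d21 d22 e1 e2 : ℝ)
    (hP : PearsonWith Ω ρ p11 p12 p21 p22 d11 d12 d21 d22 e1 e2)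
    (u : ℝ × ℝ → ℝ) (huC1 : ContDiffOn ℝ 1 u Ω) (huL2 : MemL2 Ω ρ u)
    (hgrad : MemL2M Ω ρ p11 p12 p21 p22 (gradF u)) (v1 v2 : Poly2) :
    IntegrableOn (fun x => divURhoPhi ρ u p11 p12 p21 p22 v1 v2 x) Ω ∧
    (∫ x in Ω, |divURhoPhi ρ u p11 p12 p21 p22 v1 v2 x|) ≤
      Real.sqrt (∫ x in Ω, Kfun p11 p12 p21 p22 v1 v2 d11 d12 d21 d22 e1 e2 x ^ 2 * ρ x) *
          Real.sqrt (∫ x in Ω, u x ^ 2 * ρ x) +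
        Real.sqrt (∫ x in Ω, ρ x * bilPhi p11 p12 p21 p22 x (gradF u x) (gradF u x)) *
          Real.sqrt (∫ x in Ω,
            ρ x * bilPhi p11 p12 p21 p22 x (pev v1 x, pev v2 x) (pev v1 x, pev v2 x)) := by
  obtain ⟨⟨hsym, hpos⟩, -⟩ := hΦ
  have hnn : ∀ x ∈ Ω, ∀ ζ : ℝ × ℝ, 0 ≤ bilPhi p11 p12 p21 p22 x ζ ζ := by
    intro x hx ζ
    by_cases h : ζ = 0
    · simp [h, bilPhi]
    · exact (hpos x hx ζ h).le
  have hcs : ∀ x ∈ Ω, ∀ ζ η : ℝ × ℝ, bilPhi p11 p12 p21 p22 x ζ η ^ 2 ≤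
      bilPhi p11 p12 p21 p22 x ζ ζ * bilPhi p11 p12 p21 p22 x η η := by
    intro x hx ζ η
    have hdet : 0 ≤ pev p11 x * pev p22 x - pev p12 x ^ 2 := by
      have h1 := hpos x hx (1, 0) (by simp)
      have h3 := hnn x hx (-pev p12 x, pev p11 x)
      simp only [bilPhi, ← hsym] at h1 h3
      have h1' : 0 < pev p11 x := by linarith
      have : 0 ≤ pev p11 x * (pev p11 x * pev p22 x - pev p12 x ^ 2) := by linarith
      exact nonneg_of_mul_nonneg_right this h1'
    simp only [bilPhi, ← hsym]
    linear_combination mul_nonneg hdet (sq_nonneg (ζ.1 * η.2 - ζ.2 * η.1))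
  have hmem : ∀ᵐ x ∂(volume.restrict Ω), x ∈ Ω := ae_restrict_mem hΩopen.measurableSet
  have hρ0 := hρ.2.1
  have hm := fun p => pev_measurable p
  have hg1 : Measurable fun x => (gradF u x).1 := hgrad.1.fst
  have hg2 : Measurable fun x => (gradF u x).2 := hgrad.1.snd
  have hum := huL2.1
  have hρm := hρ.1
  have hKm : Measurable (Kfun p11 p12 p21 p22 v1 v2 d11 d12 d21 d22 e1 e2) := by
    unfold Kfun
    have := hm v1
    have := hm v2
    fun_prop (disch := exact hm _)
  have hK2 : IntegrableOn (fun x =>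
      Kfun p11 p12 p21 p22 v1 v2 d11 d12 d21 d22 e1 e2 x ^ 2 * ρ x) Ω := by
    have := pev_integrable Ω ρ hρ
      (((MvPolynomial.C d11 * MvPolynomial.X 0 + MvPolynomial.C d12 * MvPolynomial.X 1
          + MvPolynomial.C e1) * v1 +
        (MvPolynomial.C d21 * MvPolynomial.X 0 + MvPolynomial.C d22 * MvPolynomial.X 1
          + MvPolynomial.C e2) * v2 +
        p11 * MvPolynomial.pderiv (0 : Fin 2) v1 + p21 * MvPolynomial.pderiv (1 : Fin 2) v1 +
        p12 * MvPolynomial.pderiv (0 : Fin 2) v2 + p22 * MvPolynomial.pderiv (1 : Fin 2) v2) ^ 2)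
    simpa [pev, Kfun] using this
  have hV : IntegrableOn (fun x =>
      ρ x * bilPhi p11 p12 p21 p22 x (pev v1 x, pev v2 x) (pev v1 x, pev v2 x)) Ω := by
    have := pev_integrable Ω ρ hρ
      (v1 * (p11 * v1 + p12 * v2) + v2 * (p21 * v1 + p22 * v2))
    simpa [pev, bilPhi, mul_comm (ρ _)] using this
  have hI1 := cs_aux (volume.restrict Ω)
    (fun x => Kfun p11 p12 p21 p22 v1 v2 d11 d12 d21 d22 e1 e2 x * u x * ρ x) _ _
    (by fun_prop) hK2 huL2.2
    (by filter_upwards [hρ0] with x hx using mul_nonneg (sq_nonneg _) hx.le)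
    (by filter_upwards [hρ0] with x hx using mul_nonneg (sq_nonneg _) hx.le)
    (by filter_upwards with x; exact le_of_eq (by ring))
  have hBm : Measurable fun x =>
      ρ x * bilPhi p11 p12 p21 p22 x (gradF u x) (pev v1 x, pev v2 x) := by
    unfold bilPhi
    exact hρm.mul ((hg1.mul (((hm p11).mul (hm v1)).add ((hm p12).mul (hm v2)))).add
      (hg2.mul (((hm p21).mul (hm v1)).add ((hm p22).mul (hm v2)))))
  have hI2 := cs_aux (volume.restrict Ω)
    (fun x => ρ x * bilPhi p11 p12 p21 p22 x (gradF u x) (pev v1 x, pev v2 x)) _ _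
    hBm.aestronglyMeasurable hgrad.2 hV
    (by filter_upwards [hρ0, hmem] with x hx hxm using mul_nonneg hx.le (hnn x hxm _))
    (by filter_upwards [hρ0, hmem] with x hx hxm using mul_nonneg hx.le (hnn x hxm _))
    (by
      filter_upwards [hρ0, hmem] with x hx hxm
      have := mul_le_mul_of_nonneg_left (hcs x hxm (gradF u x) (pev v1 x, pev v2 x))
        (sq_nonneg (ρ x))
      linarith)
  have hform : ∀ᵐ x ∂(volume.restrict Ω), divURhoPhi ρ u p11 p12 p21 p22 v1 v2 x =
      Kfun p11 p12 p21 p22 v1 v2 d11 d12 d21 d22 e1 e2 x * u x * ρ x +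
      ρ x * bilPhi p11 p12 p21 p22 x (gradF u x) (pev v1 x, pev v2 x) := by
    filter_upwards [hmem] with x hx
    exact div_formula Ω hΩopen ρ p11 p12 p21 p22 d11 d12 d21 d22 e1 e2 hP u huC1 v1 v2 x hx
  have hint : IntegrableOn (fun x => divURhoPhi ρ u p11 p12 p21 p22 v1 v2 x) Ω :=
    (hI1.1.add hI2.1).congr (by filter_upwards [hform] with x hx using hx.symm)
  refine ⟨hint, ?_⟩
  refine le_trans ?_ (add_le_add hI1.2 hI2.2)
  rw [← integral_add hI1.1.abs hI2.1.abs]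
  refine integral_mono_ae hint.abs (hI1.1.abs.add hI2.1.abs) ?_
  filter_upwards [hform] with x hx
  simp only [hx]
  exact abs_add_le _ _
end
end

section
/- Let T = {(x₁,x₂) ∈ ℝ² : x₁ > 0, x₂ > 0, x₁ + x₂ < 1}, α, β, γ > −1, ρ(x₁,x₂) = x₁^α x₂^β (1−x₁−x₂)^γ, Φ(x₁,x₂) = [[x₁(1−x₁), −x₁x₂], [−x₁x₂, x₂(1−x₂)]], and let L be the degenerate Helmholtz operator Lu = −x₁(1−x₁)∂²_{x₁}u + 2x₁x₂∂²_{x₁x₂}u − x₂(1−x₂)∂²_{x₂}u − (α+1−(α+β+γ+3)x₁)∂_{x₁}u − (β+1−(α+β+γ+3)x₂)∂_{x₂}u + (2+x₁²+x₂²)u. Suppose f ∈ L²(T,ρ) and u is a C² function on a neighborhood of the closed triangle T̄ that belongs to W(T,ρ,ρΦ), satisfies Lu = f on T, and satisfies the Neumann condition that at every interior point of each of the three edges of ∂T the limit from within T of ρ(x)(Φ(x)∇u(x))·n is 0, where n is the outward unit normal of that edge. Then for every v ∈ W(T,ρ,ρΦ) with weak gradient ∇v, ∫_T (∇v)ᵗ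 ρΦ ∇u dx₁dx₂ + ∫_T (2+x₁²+x₂²) v u ρ dx₁dx₂ = ∫_T v f ρ dx₁dx₂. -/
open MeasureTheory Filter

noncomputable section

/-- The open triangle with vertices `(0,0)`, `(1,0)`, `(0,1)`. -/
def Ttri : Set (ℝ × ℝ) := {x : ℝ × ℝ | 0 < x.1 ∧ 0 < x.2 ∧ x.1 + x.2 < 1}

/-- The Jacobi-type weight `ρ(x) = x₁^α x₂^β (1−x₁−x₂)^γ`. -/
def rhoT (α β γ : ℝ) (x : ℝ × ℝ) : ℝ :=
  x.1 ^ α * x.2 ^ β * (1 - x.1 - x.2) ^ γ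

/-- The entry `φ₁₁ = x₁(1−x₁)` of the triangle matrix `Φ`. -/
def q11 : Poly2 := MvPolynomial.X 0 * (1 - MvPolynomial.X 0)

/-- The entry `φ₁₂ = φ₂₁ = −x₁x₂` of the triangle matrix `Φ`. -/
def q12 : Poly2 := -(MvPolynomial.X 0 * MvPolynomial.X 1)

/-- The entry `φ₂₂ = x₂(1−x₂)` of the triangle matrix `Φ`. -/
def q22 : Poly2 := MvPolynomial.X 1 * (1 - MvPolynomial.X 1)

/-- The degenerate Helmholtz operator `L` on the triangle. -/
def Lop (α β γ : ℝ) (u : ℝ × ℝ → ℝ) (x : ℝ × ℝ) : ℝ :=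
  -(x.1 * (1 - x.1)) * fderiv ℝ (fun y => fderiv ℝ u y (1, 0)) x (1, 0) +
    2 * x.1 * x.2 * fderiv ℝ (fun y => fderiv ℝ u y (0, 1)) x (1, 0) -
    x.2 * (1 - x.2) * fderiv ℝ (fun y => fderiv ℝ u y (0, 1)) x (0, 1) -
    (α + 1 - (α + β + γ + 3) * x.1) * fderiv ℝ u x (1, 0) -
    (β + 1 - (α + β + γ + 3) * x.2) * fderiv ℝ u x (0, 1) +
    (2 + x.1 ^ 2 + x.2 ^ 2) * u x

/-- First component of `Φ∇u`. -/
def phiGradU1 (u : ℝ × ℝ → ℝ) (x : ℝ × ℝ) : ℝ :=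
  x.1 * (1 - x.1) * (gradF u x).1 - x.1 * x.2 * (gradF u x).2

/-- Second component of `Φ∇u`. -/
def phiGradU2 (u : ℝ × ℝ → ℝ) (x : ℝ × ℝ) : ℝ :=
  -(x.1 * x.2) * (gradF u x).1 + x.2 * (1 - x.2) * (gradF u x).2

lemma rpow_bd (a t : ℝ) (h1 : 1/3 ≤ t) (h2 : t ≤ 1) : t ^ a ≤ 1 + (1/3 : ℝ) ^ a := by
  have h3 : (0:ℝ) < (1/3 : ℝ) ^ a := by positivity
  rcases le_total 0 a with h | h
  · have := Real.rpow_le_one (by linarith : 0 ≤ t) h2 h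
    linarith
  · have := Real.rpow_le_rpow_of_nonpos (by norm_num : (0:ℝ) < 1/3) h1 h
    linarith

lemma Ttri_open : IsOpen Ttri := by
  unfold Ttri
  refine (isOpen_lt continuous_const continuous_fst).inter
    ((isOpen_lt continuous_const continuous_snd).inter
      (isOpen_lt (continuous_fst.add continuous_snd) continuous_const))

lemma rho_meas (α β γ : ℝ) : Measurable (rhoT α β γ) := by
  unfold rhoT; fun_prop

lemma rho_pos (α β γ : ℝ) {x : ℝ × ℝ} (hx : x ∈ Ttri) : 0 < rhoT α β γ x := by
  obtain ⟨h1, h2, h3⟩ := hx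
  have h4 : 0 < 1 - x.1 - x.2 := by linarith
  unfold rhoT; positivity

lemma rho_int (α β γ : ℝ) (hα : -1 < α) (hβ : -1 < β) (hγ : -1 < γ) :
    IntegrableOn (rhoT α β γ) Ttri := by
  let f : ℝ → ℝ → ℝ := fun a => Set.indicator (Set.Ioo 0 1) (fun t => t ^ a)
  have hf : ∀ a, -1 < a → Integrable (f a) := fun a ha => by
    rw [integrable_indicator_iff measurableSet_Ioo]
    exact (intervalIntegral.integrableOn_Ioo_rpow_iff one_pos).2 ha
  have fnn : ∀ a t, 0 ≤ f a t := fun a t =>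
    Set.indicator_nonneg (fun s hs => Real.rpow_nonneg hs.1.le _) t
  have fe : ∀ a t, 0 < t → t < 1 → f a t = t ^ a := fun a t h1 h2 =>
    Set.indicator_of_mem (s := Set.Ioo (0:ℝ) 1) ⟨h1, h2⟩ _
  have hc : Integrable (fun t => f γ (1 - t)) := (hf γ hγ).comp_sub_left 1
  have i1 : Integrable (fun z : ℝ × ℝ => f α z.1 * f β z.2) := (hf α hα).mul_prod (hf β hβ)
  have i2 : Integrable (fun z : ℝ × ℝ => f α z.1 * f γ (1 - (z.2 + z.1))) :=
    (measurePreserving_prod_add_right volume volume).integrable_comp_of_integrable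
      ((hf α hα).mul_prod hc)
  have i3 : Integrable (fun z : ℝ × ℝ => f γ (1 - (z.1 + z.2)) * f β z.2) :=
    (measurePreserving_add_prod volume volume).integrable_comp_of_integrable
      (hc.mul_prod (hf β hβ))
  have I := ((i1.const_mul (1 + (1/3 : ℝ) ^ γ)).add
    ((i2.const_mul (1 + (1/3 : ℝ) ^ β)).add (i3.const_mul (1 + (1/3 : ℝ) ^ α)))).integrableOn (s := Ttri)
  refine Integrable.mono' I (rho_meas α β γ).aestronglyMeasurable ?_
  refine (ae_restrict_iff' Ttri_open.measurableSet).2 (Eventually.of_forall fun x hx => ?_)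
  rw [Real.norm_of_nonneg (rho_pos α β γ hx).le]
  obtain ⟨h1, h2, h3⟩ := hx
  simp only [Pi.add_apply]
  have e3 : 1 - (x.2 + x.1) = 1 - x.1 - x.2 := by ring
  have e4 : 1 - (x.1 + x.2) = 1 - x.1 - x.2 := by ring
  rw [e3, e4, fe α x.1 h1 (by linarith), fe β x.2 h2 (by linarith),
    fe γ (1 - x.1 - x.2) (by linarith) (by linarith)]
  unfold rhoT
  have p1 : 0 < x.1 ^ α := by positivity
  have p2 : 0 < x.2 ^ β := by positivity
  have h5 : 0 < 1 - x.1 - x.2 := by linarith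
  have p3 : 0 < (1 - x.1 - x.2) ^ γ := by positivity
  have c1 : (0:ℝ) < (1/3 : ℝ) ^ α := by positivity
  have c2 : (0:ℝ) < (1/3 : ℝ) ^ β := by positivity
  have c3 : (0:ℝ) < (1/3 : ℝ) ^ γ := by positivity
  have m1 : 0 < (1 + (1/3 : ℝ) ^ γ) * (x.1 ^ α * x.2 ^ β) := by positivity
  have m2 : 0 < (1 + (1/3 : ℝ) ^ β) * (x.1 ^ α * (1 - x.1 - x.2) ^ γ) := by positivity
  have m3 : 0 < (1 + (1/3 : ℝ) ^ α) * ((1 - x.1 - x.2) ^ γ * x.2 ^ β) := by positivity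
  by_cases k1 : 1/3 ≤ x.1
  · have := mul_le_mul_of_nonneg_right (rpow_bd α x.1 k1 (by linarith)) (mul_pos p3 p2).le
    linarith
  by_cases k2 : 1/3 ≤ x.2
  · have := mul_le_mul_of_nonneg_right (rpow_bd β x.2 k2 (by linarith)) (mul_pos p1 p3).le
    linarith
  · have := mul_le_mul_of_nonneg_right (rpow_bd γ (1 - x.1 - x.2) (by linarith) (by linarith))
      (mul_pos p1 p2).le
    linarith

lemma closure_sub : closure Ttri ⊆ {x : ℝ × ℝ | 0 ≤ x.1 ∧ 0 ≤ x.2 ∧ x.1 + x.2 ≤ 1} := by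
  refine closure_minimal (fun x hx => ⟨hx.1.le, hx.2.1.le, hx.2.2.le⟩) ?_
  exact (isClosed_le continuous_const continuous_fst).inter
    ((isClosed_le continuous_const continuous_snd).inter
      (isClosed_le (continuous_fst.add continuous_snd) continuous_const))

lemma tri_compact : IsCompact {x : ℝ × ℝ | 0 ≤ x.1 ∧ 0 ≤ x.2 ∧ x.1 + x.2 ≤ 1} := by
  refine (isCompact_Icc (a := ((0:ℝ),(0:ℝ))) (b := ((1:ℝ),(1:ℝ)))).of_isClosed_subset ?_ ?_
  · exact (isClosed_le continuous_const continuous_fst).inter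
      ((isClosed_le continuous_const continuous_snd).inter
        (isClosed_le (continuous_fst.add continuous_snd) continuous_const))
  · rintro x ⟨h1, h2, h3⟩
    exact ⟨⟨h1, h2⟩, ⟨by simp; linarith, by simp; linarith⟩⟩

lemma closure_compact : IsCompact (closure Ttri) :=
  tri_compact.of_isClosed_subset isClosed_closure closure_sub

lemma rho_mul_int (α β γ : ℝ) (hα : -1 < α) (hβ : -1 < β) (hγ : -1 < γ) (g : ℝ × ℝ → ℝ)
    (hg : ContinuousOn g (closure Ttri)) : IntegrableOn (fun x => rhoT α β γ x * g x) Ttri :=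
  (rho_int α β γ hα hβ hγ).mul_continuousOn_of_subset hg Ttri_open.measurableSet
    closure_compact subset_closure

lemma tri_div_zero (F : ℝ × ℝ → ℝ) (hF : ContDiffOn ℝ 1 F Ttri) (K : Set (ℝ × ℝ)) (hK : IsCompact K)
    (hKT : K ⊆ Ttri) (h0 : ∀ x ∈ Ttri, x ∉ K → F x = 0) (e : ℝ × ℝ) :
    IntegrableOn (fun x => fderiv ℝ F x e) Ttri ∧ ∫ x in Ttri, fderiv ℝ F x e = 0 := by
  let G := Set.indicator Ttri F
  have hz : ∀ x, x ∉ K → G x = 0 := fun x hx => by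
    by_cases h : x ∈ Ttri
    · simp only [G, Set.indicator_of_mem h]; exact h0 x h hx
    · exact Set.indicator_of_notMem h _
  have hGz : ∀ x, x ∉ K → G =ᶠ[nhds x] fun _ => 0 := fun x hx => by
    filter_upwards [hK.isClosed.isOpen_compl.mem_nhds hx] with y hy using hz y hy
  have hGT : ∀ x ∈ Ttri, G =ᶠ[nhds x] F := fun x hx => by
    filter_upwards [Ttri_open.mem_nhds hx] with y hy using Set.indicator_of_mem hy _
  have hG : ContDiff ℝ 1 G := by
    rw [contDiff_iff_contDiffAt]
    intro x
    by_cases h : x ∈ K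
    · exact ((hF x (hKT h)).contDiffAt (Ttri_open.mem_nhds (hKT h))).congr_of_eventuallyEq
        (hGT x (hKT h))
    · exact contDiffAt_const.congr_of_eventuallyEq (hGz x h)
  have hcs : HasCompactSupport G := HasCompactSupport.intro hK (fun x hx => hz x hx)
  have hcs' : HasCompactSupport (fun x => fderiv ℝ G x e) := hcs.fderiv_apply ℝ e
  have hcont : Continuous (fun x => fderiv ℝ G x e) :=
    (hG.continuous_fderiv (by norm_num)).clm_apply continuous_const
  have hi := hcont.integrable_of_hasCompactSupport (μ := volume) hcs'
  have hi0 := hG.continuous.integrable_of_hasCompactSupport (μ := volume) hcs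
  have key := integral_mul_fderiv_eq_neg_fderiv_mul_of_integrable (μ := (volume : Measure (ℝ × ℝ)))
    (𝕜 := ℝ) (f := fun _ => (1:ℝ)) (g := G) (v := e) (by simp) (by simpa using hi)
    (by simpa using hi0) (fun x _ => differentiableAt_const _)
    (fun x _ => (hG.differentiable (by norm_num)) x)
  simp at key
  have hind : (fun x => fderiv ℝ G x e) = Set.indicator Ttri (fun x => fderiv ℝ F x e) := by
    funext x
    by_cases h : x ∈ Ttri
    · rw [Set.indicator_of_mem h, (hGT x h).fderiv_eq]
    · rw [Set.indicator_of_notMem h, (hGz x (fun hk => h (hKT hk))).fderiv_eq]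
      simp
  rw [hind] at hi
  constructor
  · exact (integrable_indicator_iff Ttri_open.measurableSet).1 hi
  · rw [← integral_indicator Ttri_open.measurableSet, ← hind]; exact key

def chi (s : ℝ) : ℝ := Real.smoothTransition (s - 1)

lemma chi_contDiff : ContDiff ℝ 1 chi := by
  unfold chi
  exact (Real.smoothTransition.contDiff (n := 1)).comp (contDiff_id.sub contDiff_const)

lemma chi_deriv_zero (s : ℝ) (hs : s ∉ Set.Icc (1:ℝ) 2) : deriv chi s = 0 := by
  have : ∃ c : ℝ, chi =ᶠ[nhds s] fun _ => c := by
    by_cases h : s < 1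
    · refine ⟨0, ?_⟩
      filter_upwards [isOpen_Iio.mem_nhds h] with t ht
      exact Real.smoothTransition.zero_of_nonpos (by simpa using (le_of_lt ht))
    · have h2 : 2 < s := by
        by_contra h3; exact hs ⟨not_lt.1 h, not_lt.1 h3⟩
      refine ⟨1, ?_⟩
      filter_upwards [isOpen_Ioi.mem_nhds h2] with t ht
      have : 2 < t := ht
      exact Real.smoothTransition.one_of_one_le (by linarith)
  obtain ⟨c, hc⟩ := this
  rw [hc.deriv_eq]; simp

lemma chi_bound : ∃ C : ℝ, ∀ s, |s * deriv chi s| ≤ C := by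
  have h1 : Continuous (fun s => s * deriv chi s) :=
    continuous_id.mul (chi_contDiff.continuous_deriv (by norm_num))
  have h2 : HasCompactSupport (fun s => s * deriv chi s) :=
    HasCompactSupport.intro (isCompact_Icc (a := (1:ℝ)) (b := 2))
      (fun s hs => by simp [chi_deriv_zero s hs])
  exact h1.bounded_above_of_compact_support h2

def pT (x : ℝ × ℝ) : ℝ := x.1 * x.2 * (1 - x.1 - x.2)

lemma pT_contDiff : ContDiff ℝ 1 pT := by unfold pT; fun_prop

lemma pT_deriv (x : ℝ × ℝ) : fderiv ℝ pT x (1, 0) = x.2 * (1 - 2 * x.1 - x.2) ∧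
    fderiv ℝ pT x (0, 1) = x.1 * (1 - x.1 - 2 * x.2) := by
  have h : HasFDerivAt pT _ x := 
    ((hasFDerivAt_fst (𝕜 := ℝ) (p := x)).mul (hasFDerivAt_snd (𝕜 := ℝ) (p := x))).mul
      (((hasFDerivAt_const (1:ℝ) x).sub (hasFDerivAt_fst (𝕜 := ℝ) (p := x))).sub
        (hasFDerivAt_snd (𝕜 := ℝ) (p := x)))
  rw [h.fderiv]
  constructor <;> simp <;> ring

lemma pT_pos {x : ℝ × ℝ} (hx : x ∈ Ttri) : 0 < pT x := by
  obtain ⟨h1, h2, h3⟩ := hx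
  have h4 : 0 < 1 - x.1 - x.2 := by linarith
  unfold pT; positivity

lemma cut_div (G1 G2 : ℝ × ℝ → ℝ) (h1 : ContDiffOn ℝ 1 G1 Ttri) (h2 : ContDiffOn ℝ 1 G2 Ttri)
    (hD : IntegrableOn (fun x => fderiv ℝ G1 x (1, 0) + fderiv ℝ G2 x (0, 1)) Ttri)
    (b : ℝ × ℝ → ℝ) (hb : IntegrableOn b Ttri)
    (hbd : ∀ x ∈ Ttri, |x.2 * (1 - 2 * x.1 - x.2) * G1 x + x.1 * (1 - x.1 - 2 * x.2) * G2 x|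
      ≤ pT x * b x) :
    ∫ x in Ttri, (fderiv ℝ G1 x (1, 0) + fderiv ℝ G2 x (0, 1)) = 0 := by
  obtain ⟨C, hC⟩ := chi_bound
  let η : ℕ → ℝ × ℝ → ℝ := fun n x => chi (n * pT x)
  have hη : ∀ n, ContDiff ℝ 1 (η n) := fun n =>
    chi_contDiff.comp (contDiff_const.mul pT_contDiff)
  have hηd : ∀ n x e, fderiv ℝ (η n) x e = n * deriv chi (n * pT x) * fderiv ℝ pT x e := by
    intro n x e
    have a1 : HasFDerivAt pT (fderiv ℝ pT x) x :=
      (pT_contDiff.differentiable (by norm_num) x).hasFDerivAt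
    have a2 := (chi_contDiff.differentiable (by norm_num) (n * pT x)).hasDerivAt
    have a3 : HasFDerivAt (η n) _ x := HasDerivAt.comp_hasFDerivAt (h₂ := chi) (f := fun y => (n:ℝ) * pT y) x a2 (a1.const_mul (n:ℝ))
    rw [a3.fderiv]; simp; ring
  have hprod : ∀ (G : ℝ × ℝ → ℝ), ContDiffOn ℝ 1 G Ttri → ∀ n e, 
      (IntegrableOn (fun x => fderiv ℝ (fun y => η n y * G y) x e) Ttri ∧
      ∫ x in Ttri, fderiv ℝ (fun y => η n y * G y) x e = 0) ∧
      ∀ x ∈ Ttri, fderiv ℝ (fun y => η n y * G y) x e = 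
        chi (n * pT x) * fderiv ℝ G x e +  n * deriv chi (n * pT x) * fderiv ℝ pT x e * G x := by
    intro G hG n e
    refine ⟨?_, ?_⟩
    · let K : Set (ℝ × ℝ) := {x : ℝ × ℝ | 0 ≤ x.1 ∧ 0 ≤ x.2 ∧ x.1 + x.2 ≤ 1} ∩
        {x | 1 ≤ n * pT x}
      refine tri_div_zero _ ((hη n).contDiffOn.mul hG) K ?_ ?_ ?_ e
      · exact tri_compact.inter_right
          (isClosed_le continuous_const (continuous_const.mul pT_contDiff.continuous))
      · rintro x ⟨⟨k1, k2, k3⟩, k4⟩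
        have k5 : pT x ≠ 0 := by
          intro h; simp only [Set.mem_ofPred_eq, h] at k4; norm_num at k4
        unfold pT at k5
        refine ⟨lt_of_le_of_ne k1 ?_, lt_of_le_of_ne k2 ?_, lt_of_le_of_ne k3 ?_⟩
        · intro h; apply k5; rw [← h]; ring
        · intro h; apply k5; rw [← h]; ring
        · intro h; apply k5
          have : 1 - x.1 - x.2 = 0 := by linarith
          rw [this]; ring
      · intro x hx hxK
        have : ¬ (1 ≤ n * pT x) := fun h => hxK ⟨⟨hx.1.le, hx.2.1.le, hx.2.2.le⟩, h⟩
        have : chi (n * pT x) = 0 := Real.smoothTransition.zero_of_nonpos (by linarith)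
        simp [η, this]
    · intro x hx
      have d1 := ((hη n).differentiable (by norm_num) x)
      have d2 := ((hG x hx).contDiffAt (Ttri_open.mem_nhds hx)).differentiableAt (by norm_num)
      have := (d1.hasFDerivAt.mul d2.hasFDerivAt).fderiv
      erw [this]
      simp [hηd, η]; ring
  let Fn : ℕ → ℝ × ℝ → ℝ := fun n x => fderiv ℝ (fun y => η n y * G1 y) x (1, 0) +
    fderiv ℝ (fun y => η n y * G2 y) x (0, 1)
  have hFi : ∀ n, ∫ x in Ttri, Fn n x = 0 := fun n => by
    have a := (hprod G1 h1 n (1, 0)).1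
    have b := (hprod G2 h2 n (0, 1)).1
    simp only [Fn]
    rw [integral_add a.1 b.1, a.2, b.2, add_zero]
  have hlim : Tendsto (fun n => ∫ x in Ttri, Fn n x) atTop
      (nhds (∫ x in Ttri, (fderiv ℝ G1 x (1, 0) + fderiv ℝ G2 x (0, 1)))) := by
    refine tendsto_integral_of_dominated_convergence
      (fun x => |fderiv ℝ G1 x (1, 0) + fderiv ℝ G2 x (0, 1)| + C * b x) ?_ 
      (hD.abs.add (hb.const_mul C)) ?_ ?_
    · intro n
      exact ((hprod G1 h1 n (1, 0)).1.1.add (hprod G2 h2 n (0, 1)).1.1).aestronglyMeasurable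
    · intro n
      refine (ae_restrict_iff' Ttri_open.measurableSet).2 (Eventually.of_forall fun x hx => ?_)
      simp only [Fn]
      rw [(hprod G1 h1 n (1, 0)).2 x hx, (hprod G2 h2 n (0, 1)).2 x hx, (pT_deriv x).1,
        (pT_deriv x).2, Real.norm_eq_abs]
      have hp := pT_pos hx
      have hbx := hbd x hx
      have hb0 : 0 ≤ b x := nonneg_of_mul_nonneg_right ((abs_nonneg _).trans hbx) hp
      have c0 : 0 ≤ chi (n * pT x) := Real.smoothTransition.nonneg _
      have c1 : chi (n * pT x) ≤ 1 := Real.smoothTransition.le_one _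
      have e : ∀ a d1 d2 k p1 p2 g1 g2 : ℝ, a * d1 + k * p1 * g1 + (a * d2 + k * p2 * g2) =
        a * (d1 + d2) + k * (p1 * g1 + p2 * g2) := by intros; ring
      rw [e]
      refine (abs_add_le _ _).trans (add_le_add ?_ ?_)
      · rw [abs_mul, abs_of_nonneg c0]
        exact mul_le_of_le_one_left (abs_nonneg _) c1
      · rw [abs_mul]
        calc _ ≤ |n * deriv chi (n * pT x)| * (pT x * b x) := by gcongr
          _ = |n * pT x * deriv chi (n * pT x)| * b x := by
            rw [abs_mul, abs_mul, abs_mul, abs_of_pos hp]; ring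
          _ ≤ C * b x := by gcongr; exact hC _
    · refine (ae_restrict_iff' Ttri_open.measurableSet).2 (Eventually.of_forall fun x hx => ?_)
      have hp := pT_pos hx
      obtain ⟨N, hN⟩ := exists_nat_gt (2 / pT x)
      refine tendsto_const_nhds.congr' ?_
      filter_upwards [eventually_ge_atTop N] with n hn
      have hn2 : 2 < n * pT x := by
        rw [div_lt_iff₀ hp] at hN
        have : (N:ℝ) ≤ n := by exact_mod_cast hn
        nlinarith
      have d0 := chi_deriv_zero (n * pT x) (fun h => by linarith [h.2])
      have c1 : chi (n * pT x) = 1 := Real.smoothTransition.one_of_one_le (by linarith)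
      simp only [Fn]
      rw [(hprod G1 h1 n (1, 0)).2 x hx, (hprod G2 h2 n (0, 1)).2 x hx, d0, c1]
      ring
  simp only [hFi] at hlim
  exact (tendsto_nhds_unique tendsto_const_nhds hlim).symm

lemma pev_contDiff (q : Poly2) : ContDiff ℝ 1 (pev q) := by
  have : ∀ q : Poly2, ContDiff ℝ 1 (pev q) := by
    intro q
    induction q using MvPolynomial.induction_on with
    | C a =>
      have e : pev (MvPolynomial.C a) = fun _ => a := by funext x; simp [pev]
      rw [e]; exact contDiff_const
    | add p q hp hq =>
      have e : pev (p + q) = fun x => pev p x + pev q x := by funext x; simp [pev]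
      rw [e]; exact hp.add hq
    | mul_X p i hp =>
      fin_cases i
      · have e : pev (p * MvPolynomial.X 0) = fun x => pev p x * x.1 := by funext x; simp [pev]
        simp only [Fin.zero_eta]; rw [e]; exact hp.mul contDiff_fst
      · have e : pev (p * MvPolynomial.X 1) = fun x => pev p x * x.2 := by funext x; simp [pev]
        simp only [Fin.mk_one]; rw [e]; exact hp.mul contDiff_snd
  exact this q

lemma pev_fderiv (q : Poly2) (x : ℝ × ℝ) : fderiv ℝ (pev q) x (1, 0) = (polyGrad q x).1 ∧
    fderiv ℝ (pev q) x (0, 1) = (polyGrad q x).2 := by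
  induction q using MvPolynomial.induction_on with
  | C a => 
    have e : pev (MvPolynomial.C a) = fun _ => a := by funext x; simp [pev]
    rw [e]; simp [polyGrad, pev]
  | add p q hp hq =>
    have e : pev (p + q) = pev p + pev q := by funext x; simp [pev]
    rw [e, fderiv_add ((pev_contDiff p).differentiable (by norm_num) x)
      ((pev_contDiff q).differentiable (by norm_num) x)]
    simp [polyGrad, pev] at hp hq ⊢
    rw [hp.1, hp.2, hq.1, hq.2]; simp
  | mul_X p i hp =>
    have hd := ((pev_contDiff p).differentiable (by norm_num) x).hasFDerivAt
    fin_cases i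
    · have e : pev (p * MvPolynomial.X 0) = fun x => pev p x * x.1 := by funext x; simp [pev]
      have := (hd.mul (hasFDerivAt_fst (𝕜 := ℝ) (p := x))).fderiv
      simp only [Fin.zero_eta]; rw [e]
      erw [this]
      simp [polyGrad, pev] at hp ⊢
      rw [hp.1, hp.2]; simp
    · have e : pev (p * MvPolynomial.X 1) = fun x => pev p x * x.2 := by funext x; simp [pev]
      have := (hd.mul (hasFDerivAt_snd (𝕜 := ℝ) (p := x))).fderiv
      simp only [Fin.mk_one]; rw [e]
      erw [this]
      simp [polyGrad, pev] at hp ⊢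
      rw [hp.1, hp.2]; simp

lemma bil_eq (x a b : ℝ × ℝ) : bilPhi q11 q12 q12 q22 x a b =
    a.1 * (x.1 * (1 - x.1) * b.1 - x.1 * x.2 * b.2) +
      a.2 * (-(x.1 * x.2) * b.1 + x.2 * (1 - x.2) * b.2) := by
  simp only [bilPhi, pev, q11, q12, q22, map_mul, map_sub, map_neg, map_one, MvPolynomial.eval_X,
    Matrix.cons_val_zero, Matrix.cons_val_one]; ring

lemma bil_nonneg {x : ℝ × ℝ} (hx : x ∈ Ttri) (a : ℝ × ℝ) : 0 ≤ bilPhi q11 q12 q12 q22 x a a := by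
  obtain ⟨h1, h2, h3⟩ := hx
  have : bilPhi q11 q12 q12 q22 x a a = x.1 * x.2 * (a.1 - a.2) ^ 2 +
      (1 - x.1 - x.2) * (x.1 * a.1 ^ 2 + x.2 * a.2 ^ 2) := by rw [bil_eq]; ring
  rw [this]
  have h4 : 0 < 1 - x.1 - x.2 := by linarith
  positivity

lemma bil_cs {x : ℝ × ℝ} (hx : x ∈ Ttri) (a b : ℝ × ℝ) (s : ℝ) :
    2 * s * |bilPhi q11 q12 q12 q22 x a b| ≤
      bilPhi q11 q12 q12 q22 x a a + s ^ 2 * bilPhi q11 q12 q12 q22 x b b := by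
  have h1 := bil_nonneg hx (a + s • b)
  have h2 := bil_nonneg hx (a - s • b)
  have e1 : bilPhi q11 q12 q12 q22 x (a + s • b) (a + s • b) = bilPhi q11 q12 q12 q22 x a a +
    s ^ 2 * bilPhi q11 q12 q12 q22 x b b + 2 * s * bilPhi q11 q12 q12 q22 x a b := by
    simp [bil_eq]; ring
  have e2 : bilPhi q11 q12 q12 q22 x (a - s • b) (a - s • b) = bilPhi q11 q12 q12 q22 x a a +
    s ^ 2 * bilPhi q11 q12 q12 q22 x b b - 2 * s * bilPhi q11 q12 q12 q22 x a b := by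
    simp [bil_eq]; ring
  rcases abs_cases (bilPhi q11 q12 q12 q22 x a b) with ⟨h, _⟩ | ⟨h, _⟩ <;> rw [h] <;> linarith

lemma rho_deriv (α β γ : ℝ) {x : ℝ × ℝ} (hx : x ∈ Ttri) :
    ∃ r : ℝ × ℝ →L[ℝ] ℝ, HasFDerivAt (rhoT α β γ) r x ∧
      r (1, 0) = rhoT α β γ x * (α / x.1 - γ / (1 - x.1 - x.2)) ∧
      r (0, 1) = rhoT α β γ x * (β / x.2 - γ / (1 - x.1 - x.2)) := by
  obtain ⟨h1, h2, h3⟩ := hx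
  have h4 : 0 < 1 - x.1 - x.2 := by linarith
  have a1 := (hasFDerivAt_fst (𝕜 := ℝ) (p := x)).rpow_const (p := α) (Or.inl h1.ne')
  have a2 := (hasFDerivAt_snd (𝕜 := ℝ) (p := x)).rpow_const (p := β) (Or.inl h2.ne')
  have a3 := (((hasFDerivAt_const (1:ℝ) x).sub (hasFDerivAt_fst (𝕜 := ℝ) (p := x))).sub
        (hasFDerivAt_snd (𝕜 := ℝ) (p := x))).rpow_const (p := γ) (Or.inl h4.ne')
  refine ⟨_, (a1.mul a2).mul a3, ?_, ?_⟩
  · simp [rhoT]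
    rw [Real.rpow_sub_one h1.ne', Real.rpow_sub_one h4.ne']
    field_simp
    ring
  · simp [rhoT]
    rw [Real.rpow_sub_one h2.ne', Real.rpow_sub_one h4.ne']
    field_simp
    ring

lemma rho_contDiffOn (α β γ : ℝ) : ContDiffOn ℝ 1 (rhoT α β γ) Ttri := by
  unfold rhoT
  refine ((contDiffOn_fst.rpow_const_of_ne fun x hx => hx.1.ne').mul
    (contDiffOn_snd.rpow_const_of_ne fun x hx => hx.2.1.ne')).mul
    (((contDiffOn_const.sub contDiffOn_fst).sub contDiffOn_snd).rpow_const_of_ne fun x hx => ?_)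
  have : 0 < 1 - x.1 - x.2 := by linarith [hx.2.2]
  exact this.ne'

lemma flux_div (α β γ : ℝ) (u : ℝ × ℝ → ℝ) {x : ℝ × ℝ} (hx : x ∈ Ttri)
    (hu : ContDiffAt ℝ 2 u x) :
    fderiv ℝ (fun y => rhoT α β γ y * phiGradU1 u y) x (1, 0) +
      fderiv ℝ (fun y => rhoT α β γ y * phiGradU2 u y) x (0, 1) =
      rhoT α β γ x * ((2 + x.1 ^ 2 + x.2 ^ 2) * u x - Lop α β γ u x) := by
  obtain ⟨r, hr, r1, r2⟩ := rho_deriv α β γ hx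
  obtain ⟨h1, h2, h3⟩ := hx
  have h4 : 0 < 1 - x.1 - x.2 := by linarith
  have hd : DifferentiableAt ℝ (fderiv ℝ u) x :=
    (hu.fderiv_right (m := 1) (by norm_num)).differentiableAt (by norm_num)
  have hsym := hu.isSymmSndFDerivAt (by simp)
  have ha : HasFDerivAt (fun y => fderiv ℝ u y (1, 0)) _ x :=
    hd.hasFDerivAt.clm_apply (hasFDerivAt_const ((1:ℝ), (0:ℝ)) x)
  have hb : HasFDerivAt (fun y => fderiv ℝ u y (0, 1)) _ x :=
    hd.hasFDerivAt.clm_apply (hasFDerivAt_const ((0:ℝ), (1:ℝ)) x)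
  have f1 := hasFDerivAt_fst (𝕜 := ℝ) (p := x)
  have f2 := hasFDerivAt_snd (𝕜 := ℝ) (p := x)
  have one : HasFDerivAt (fun _ : ℝ × ℝ => (1:ℝ)) (0 : ℝ × ℝ →L[ℝ] ℝ) x := hasFDerivAt_const (1:ℝ) x
  have F1 : HasFDerivAt (fun y => rhoT α β γ y * phiGradU1 u y) _ x :=
    hr.mul (((f1.mul (one.sub f1)).mul ha).sub ((f1.mul f2).mul hb))
  have F2 : HasFDerivAt (fun y => rhoT α β γ y * phiGradU2 u y) _ x :=
    hr.mul (((f1.mul f2).neg.mul ha).add ((f2.mul (one.sub f2)).mul hb))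
  have s := hsym (1, 0) (0, 1)
  unfold Lop
  rw [F1.fderiv, F2.fderiv, ha.fderiv, hb.fderiv]
  simp [r1, r2, s, phiGradU1, phiGradU2, gradF]
  field_simp
  ring

lemma poly_case (α β γ : ℝ) (hα : -1 < α) (hβ : -1 < β) (hγ : -1 < γ)
    (f u : ℝ × ℝ → ℝ)
    (huC2 : ∃ U : Set (ℝ × ℝ), IsOpen U ∧ closure Ttri ⊆ U ∧ ContDiffOn ℝ 2 u U)
    (hLu : ∀ x ∈ Ttri, Lop α β γ u x = f x) (q : Poly2)
    (hint : IntegrableOn (fun x => rhoT α β γ x * bilPhi q11 q12 q12 q22 x (polyGrad q x) (gradF u x)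
      + pev q x * ((2 + x.1 ^ 2 + x.2 ^ 2) * u x - f x) * rhoT α β γ x) Ttri) :
    ∫ x in Ttri, (rhoT α β γ x * bilPhi q11 q12 q12 q22 x (polyGrad q x) (gradF u x)
      + pev q x * ((2 + x.1 ^ 2 + x.2 ^ 2) * u x - f x) * rhoT α β γ x) = 0 := by
  obtain ⟨U, hU, hTU, hu⟩ := huC2
  have hsub : Ttri ⊆ U := subset_closure.trans hTU
  have hDu : ContDiffOn ℝ 1 (fderiv ℝ u) U := hu.fderiv_of_isOpen hU (by norm_num)
  have hux : ContDiffOn ℝ 1 (fun y => fderiv ℝ u y (1, 0)) U := hDu.clm_apply contDiffOn_const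
  have huy : ContDiffOn ℝ 1 (fun y => fderiv ℝ u y (0, 1)) U := hDu.clm_apply contDiffOn_const
  have hρ := rho_contDiffOn α β γ
  have hF1 : ContDiffOn ℝ 1 (fun y => rhoT α β γ y * phiGradU1 u y) Ttri := by
    refine hρ.mul ?_
    exact ((contDiffOn_fst.mul (contDiffOn_const.sub contDiffOn_fst)).mul (hux.mono hsub)).sub
      ((contDiffOn_fst.mul contDiffOn_snd).mul (huy.mono hsub))
  have hF2 : ContDiffOn ℝ 1 (fun y => rhoT α β γ y * phiGradU2 u y) Ttri := by
    refine hρ.mul ?_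
    exact ((contDiffOn_fst.mul contDiffOn_snd).neg.mul (hux.mono hsub)).add
      ((contDiffOn_snd.mul (contDiffOn_const.sub contDiffOn_snd)).mul (huy.mono hsub))
  have hq := pev_contDiff q
  have hdiv : ∀ x ∈ Ttri, 
      fderiv ℝ (fun y => pev q y * (rhoT α β γ y * phiGradU1 u y)) x (1, 0) +
      fderiv ℝ (fun y => pev q y * (rhoT α β γ y * phiGradU2 u y)) x (0, 1) =
      rhoT α β γ x * bilPhi q11 q12 q12 q22 x (polyGrad q x) (gradF u x)
      + pev q x * ((2 + x.1 ^ 2 + x.2 ^ 2) * u x - f x) * rhoT α β γ x := by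
    intro x hx
    have key := flux_div α β γ u hx ((hu x (hsub hx)).contDiffAt (hU.mem_nhds (hsub hx)))
    have dq := (hq.differentiable (by norm_num) x).hasFDerivAt
    have d1 := (((hF1 x hx).contDiffAt (Ttri_open.mem_nhds hx)).differentiableAt
      (by norm_num)).hasFDerivAt
    have d2 := (((hF2 x hx).contDiffAt (Ttri_open.mem_nhds hx)).differentiableAt
      (by norm_num)).hasFDerivAt
    have g1 : HasFDerivAt (fun y => pev q y * (rhoT α β γ y * phiGradU1 u y)) _ x := dq.mul d1
    have g2 : HasFDerivAt (fun y => pev q y * (rhoT α β γ y * phiGradU2 u y)) _ x := dq.mul d2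
    rw [g1.fderiv, g2.fderiv, bil_eq]
    rw [hLu x hx] at key
    simp only [add_apply, smul_apply, smul_eq_mul,
      (pev_fderiv q x).1, (pev_fderiv q x).2]
    have e : (2 + x.1 ^ 2 + x.2 ^ 2) * u x - f x = (2 + x.1 ^ 2 + x.2 ^ 2) * u x - f x := rfl
    have : pev q x * ((2 + x.1 ^ 2 + x.2 ^ 2) * u x - f x) * rhoT α β γ x = pev q x *
      (fderiv ℝ (fun y => rhoT α β γ y * phiGradU1 u y) x (1, 0) +
      fderiv ℝ (fun y => rhoT α β γ y * phiGradU2 u y) x (0, 1)) := by rw [key]; ring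
    rw [this]
    simp only [phiGradU1, phiGradU2]
    ring
  rw [← setIntegral_congr_fun Ttri_open.measurableSet hdiv]
  refine cut_div _ _ (hq.contDiffOn.mul hF1) (hq.contDiffOn.mul hF2)
    (hint.congr_fun (fun x hx => (hdiv x hx).symm) Ttri_open.measurableSet)
    (fun x => rhoT α β γ x * |pev q x * ((1 - 3 * x.1) * fderiv ℝ u x (1, 0) +
      (1 - 3 * x.2) * fderiv ℝ u x (0, 1))|) ?_ ?_
  · refine rho_mul_int α β γ hα hβ hγ _ (ContinuousOn.abs ?_)
    have k1 := (hux.continuousOn).mono hTU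
    have k2 := (huy.continuousOn).mono hTU
    have k3 := hq.continuous.continuousOn (s := closure Ttri)
    fun_prop
  · intro x hx
    have hp := pT_pos hx
    have hr := rho_pos α β γ hx
    have : x.2 * (1 - 2 * x.1 - x.2) * (pev q x * (rhoT α β γ x * phiGradU1 u x)) +
      x.1 * (1 - x.1 - 2 * x.2) * (pev q x * (rhoT α β γ x * phiGradU2 u x)) =
      pT x * (rhoT α β γ x * (pev q x * ((1 - 3 * x.1) * fderiv ℝ u x (1, 0) +
      (1 - 3 * x.2) * fderiv ℝ u x (0, 1)))) := by
      simp only [phiGradU1, phiGradU2, gradF, pT]; ring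
    rw [this, abs_mul, abs_mul, abs_of_pos hp, abs_of_pos hr]

lemma int_mul (α β γ : ℝ) (a b : ℝ × ℝ → ℝ) (ha : MemL2 Ttri (rhoT α β γ) a)
    (hb : MemL2 Ttri (rhoT α β γ) b) :
    IntegrableOn (fun x => a x * b x * rhoT α β γ x) Ttri := by
  refine Integrable.mono' (ha.2.add hb.2)
    ((ha.1.mul hb.1).mul (rho_meas α β γ)).aestronglyMeasurable ?_
  refine (ae_restrict_iff' Ttri_open.measurableSet).2 (Eventually.of_forall fun x hx => ?_)
  have hr := rho_pos α β γ hx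
  simp only [Pi.add_apply]
  rw [norm_mul, Real.norm_of_nonneg hr.le, ← add_mul]
  refine mul_le_mul_of_nonneg_right ?_ hr.le
  rw [Real.norm_eq_abs, abs_le]
  constructor <;> nlinarith [sq_nonneg (a x + b x), sq_nonneg (a x - b x), sq_nonneg (a x), sq_nonneg (b x)]

lemma bil_meas (a b : ℝ × ℝ → ℝ × ℝ) (ha : Measurable a) (hb : Measurable b) :
    Measurable (fun x => bilPhi q11 q12 q12 q22 x (a x) (b x)) := by
  simp only [bil_eq]; fun_prop

lemma int_bil (α β γ : ℝ) (a b : ℝ × ℝ → ℝ × ℝ) (ha : MemL2M Ttri (rhoT α β γ) q11 q12 q12 q22 a)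
    (hb : MemL2M Ttri (rhoT α β γ) q11 q12 q12 q22 b) :
    IntegrableOn (fun x => rhoT α β γ x * bilPhi q11 q12 q12 q22 x (a x) (b x)) Ttri := by
  refine Integrable.mono' (ha.2.add hb.2)
    ((rho_meas α β γ).mul (bil_meas a b ha.1 hb.1)).aestronglyMeasurable ?_
  refine (ae_restrict_iff' Ttri_open.measurableSet).2 (Eventually.of_forall fun x hx => ?_)
  have hr := rho_pos α β γ hx
  simp only [Pi.add_apply]
  rw [norm_mul, Real.norm_of_nonneg hr.le, ← mul_add]
  refine mul_le_mul_of_nonneg_left ?_ hr.le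
  have := bil_cs hx (a x) (b x) 1
  rw [Real.norm_eq_abs]
  linarith [abs_nonneg (bilPhi q11 q12 q12 q22 x (a x) (b x))]

/-- Every classical solution of the degenerate Neumann problem on the
triangle satisfies the weak formulation. -/
theorem classical_solution_satisfies_weak_formulation
    (α β γ : ℝ) (hα : -1 < α) (hβ : -1 < β) (hγ : -1 < γ)
    (f : ℝ × ℝ → ℝ) (hf : MemL2 Ttri (rhoT α β γ) f)
    (u : ℝ × ℝ → ℝ)
    (huC2 : ∃ U : Set (ℝ × ℝ), IsOpen U ∧ closure Ttri ⊆ U ∧ ContDiffOn ℝ 2 u U)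
    (huW : MemW Ttri (rhoT α β γ) q11 q12 q12 q22 u (gradF u))
    (hLu : ∀ x ∈ Ttri, Lop α β γ u x = f x)
    (hNeu1 : ∀ t : ℝ, 0 < t → t < 1 →
      Tendsto (fun x : ℝ × ℝ =>
          rhoT α β γ x * ((-1 : ℝ) * phiGradU1 u x + 0 * phiGradU2 u x))
        (nhdsWithin ((0 : ℝ), t) Ttri) (nhds 0))
    (hNeu2 : ∀ t : ℝ, 0 < t → t < 1 →
      Tendsto (fun x : ℝ × ℝ =>
          rhoT α β γ x * (0 * phiGradU1 u x + (-1 : ℝ) * phiGradU2 u x))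
        (nhdsWithin ((t : ℝ), (0 : ℝ)) Ttri) (nhds 0))
    (hNeu3 : ∀ t : ℝ, 0 < t → t < 1 →
      Tendsto (fun x : ℝ × ℝ => rhoT α β γ x *
          ((1 / Real.sqrt 2) * phiGradU1 u x + (1 / Real.sqrt 2) * phiGradU2 u x))
        (nhdsWithin ((t : ℝ), 1 - t) Ttri) (nhds 0)) :
    ∀ (v : ℝ × ℝ → ℝ) (h : ℝ × ℝ → ℝ × ℝ), MemW Ttri (rhoT α β γ) q11 q12 q12 q22 v h →
      (∫ x in Ttri, rhoT α β γ x * bilPhi q11 q12 q12 q22 x (h x) (gradF u x)) +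
          (∫ x in Ttri, (2 + x.1 ^ 2 + x.2 ^ 2) * v x * u x * rhoT α β γ x) =
        ∫ x in Ttri, v x * f x * rhoT α β γ x := by
  intro v h hv
  obtain ⟨hv2, ⟨hh, -⟩, happ⟩ := hv
  obtain ⟨hu2, ⟨hgu, -⟩, -⟩ := huW
  -- the zero-order residual
  let c : ℝ × ℝ → ℝ := fun x => (2 + x.1 ^ 2 + x.2 ^ 2) * u x
  have hc : MemL2 Ttri (rhoT α β γ) c := by
    refine ⟨?_, ?_⟩
    · have := hu2.1
      fun_prop
    · have hk : ContinuousOn (fun x : ℝ × ℝ => (2 + x.1 ^ 2 + x.2 ^ 2) ^ 2) (closure Ttri) := by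
        fun_prop
      refine (hu2.2.mul_continuousOn_of_subset hk Ttri_open.measurableSet closure_compact
        subset_closure).congr_fun (fun x _ => ?_) Ttri_open.measurableSet
      simp only [c]; ring
  have hsub : ∀ a b, MemL2 Ttri (rhoT α β γ) a → MemL2 Ttri (rhoT α β γ) b →
      MemL2 Ttri (rhoT α β γ) (fun x => a x - b x) := fun a b ha hb => by
    refine ⟨ha.1.sub hb.1, ?_⟩
    refine ((ha.2.add hb.2).sub ((int_mul α β γ a b ha hb).const_mul 2)).congr_fun
      (fun x _ => ?_) Ttri_open.measurableSet
    simp only [Pi.add_apply, Pi.sub_apply]; ring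
  let w : ℝ × ℝ → ℝ := fun x => c x - f x
  have hw : MemL2 Ttri (rhoT α β γ) w := hsub c f hc hf
  have I1 := int_bil α β γ h (gradF u) hh hgu
  have I2 := int_mul α β γ v c hv2 hc
  have I3 := int_mul α β γ v f hv2 hf
  let E : (ℝ × ℝ → ℝ) → (ℝ × ℝ → ℝ × ℝ) → ℝ × ℝ → ℝ := fun a g x =>
    rhoT α β γ x * bilPhi q11 q12 q12 q22 x (g x) (gradF u x) + a x * w x * rhoT α β γ x
  have hE : ∀ a g, MemL2 Ttri (rhoT α β γ) a → MemL2M Ttri (rhoT α β γ) q11 q12 q12 q22 g →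
      IntegrableOn (E a g) Ttri := fun a g ha hg =>
    (int_bil α β γ g (gradF u) hg hgu).add (int_mul α β γ a w ha hw)
  set M : ℝ := (∫ x in Ttri, w x ^ 2 * rhoT α β γ x) +
    ∫ x in Ttri, rhoT α β γ x * bilPhi q11 q12 q12 q22 x (gradF u x) (gradF u x) with hM
  have bound : ∀ ε : ℝ, 0 < ε → |∫ x in Ttri, E v h x| ≤ ε * ((1 + M) / 2) := by
    intro ε hε
    obtain ⟨q, hq⟩ := happ ε hε
    have cq := (pev_contDiff q).continuous
    have cg1 := (pev_contDiff (MvPolynomial.pderiv (0 : Fin 2) q)).continuous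
    have cg2 := (pev_contDiff (MvPolynomial.pderiv (1 : Fin 2) q)).continuous
    have mq : MemL2 Ttri (rhoT α β γ) (pev q) := by
      refine ⟨cq.measurable, ?_⟩
      simp only [mul_comm _ (rhoT α β γ _)]
      exact rho_mul_int α β γ hα hβ hγ _ (cq.pow 2).continuousOn
    have mg : MemL2M Ttri (rhoT α β γ) q11 q12 q12 q22 (polyGrad q) := by
      refine ⟨cg1.measurable.prodMk cg2.measurable, ?_⟩
      refine rho_mul_int α β γ hα hβ hγ _ (Continuous.continuousOn ?_)
      simp only [bil_eq, polyGrad]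
      fun_prop
    have mvq := hsub v (pev q) hv2 mq
    have mhg : MemL2M Ttri (rhoT α β γ) q11 q12 q12 q22 (fun x => h x - polyGrad q x) := by
      refine ⟨hh.1.sub mg.1, ?_⟩
      refine ((hh.2.add mg.2).sub ((int_bil α β γ h (polyGrad q) hh mg).const_mul 2)).congr_fun
        (fun x _ => ?_) Ttri_open.measurableSet
      simp only [Pi.add_apply, Pi.sub_apply, bil_eq, Prod.fst_sub, Prod.snd_sub]; ring
    have Iq := hE _ _ mq mg
    have z : ∫ x in Ttri, E (pev q) (polyGrad q) x = 0 :=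
      poly_case α β γ hα hβ hγ f u huC2 hLu q Iq
    have Id := hE _ _ mvq mhg
    have e1 : ∫ x in Ttri, E v h x =
        ∫ x in Ttri, E (fun x => v x - pev q x) (fun x => h x - polyGrad q x) x := by
      have : ∀ x, E v h x = E (pev q) (polyGrad q) x +
          E (fun x => v x - pev q x) (fun x => h x - polyGrad q x) x := fun x => by
        simp only [E, bil_eq, Prod.fst_sub, Prod.snd_sub]; ring
      simp only [this]
      rw [integral_add Iq Id, z, zero_add]
    let R : ℝ × ℝ → ℝ := fun x =>
      (((v x - pev q x) ^ 2 * rhoT α β γ x + rhoT α β γ x *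
        bilPhi q11 q12 q12 q22 x (h x - polyGrad q x) (h x - polyGrad q x)) + ε ^ 2 *
      (w x ^ 2 * rhoT α β γ x + rhoT α β γ x *
        bilPhi q11 q12 q12 q22 x (gradF u x) (gradF u x)))
    have iR1 := mvq.2.add mhg.2
    have iR2 := (hw.2.add hgu.2).const_mul (ε ^ 2)
    have iR : IntegrableOn R Ttri := iR1.add iR2
    have vR : ∫ x in Ttri, R x = ((∫ x in Ttri, (v x - pev q x) ^ 2 * rhoT α β γ x) +
        (∫ x in Ttri, rhoT α β γ x * bilPhi q11 q12 q12 q22 x (h x - polyGrad q x)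
          (h x - polyGrad q x))) + ε ^ 2 * M := by
      have a1 : ∫ x in Ttri, R x = _ := integral_add iR1 iR2
      rw [a1]
      congr 1
      · exact integral_add mvq.2 mhg.2
      · rw [hM, ← integral_add hw.2 hgu.2, ← integral_const_mul]
    have le : 2 * ε * |∫ x in Ttri, E v h x| ≤ ∫ x in Ttri, R x := by
      rw [e1]
      calc _ ≤ 2 * ε * ∫ x in Ttri, |E (fun x => v x - pev q x) (fun x => h x - polyGrad q x) x| := by
            gcongr; exact abs_integral_le_integral_abs
        _ = ∫ x in Ttri, 2 * ε * |E (fun x => v x - pev q x) (fun x => h x - polyGrad q x) x| := by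
            rw [integral_const_mul]
        _ ≤ _ := by
            refine setIntegral_mono_on (Id.abs.const_mul _) iR Ttri_open.measurableSet
              fun x hx => ?_
            have hr := rho_pos α β γ hx
            have b1 := bil_cs hx (h x - polyGrad q x) (gradF u x) ε
            have b2 : 2 * ε * |(v x - pev q x) * w x| ≤ (v x - pev q x) ^ 2 + ε ^ 2 * w x ^ 2 := by
              rcases abs_cases ((v x - pev q x) * w x) with ⟨k, _⟩ | ⟨k, _⟩ <;> rw [k]
              · nlinarith [sq_nonneg ((v x - pev q x) - ε * w x)]
              · nlinarith [sq_nonneg ((v x - pev q x) + ε * w x)]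
            have b3 : |E (fun x => v x - pev q x) (fun x => h x - polyGrad q x) x| ≤
                rhoT α β γ x * (|bilPhi q11 q12 q12 q22 x (h x - polyGrad q x) (gradF u x)| +
                  |(v x - pev q x) * w x|) := by
              simp only [E]
              refine (abs_add_le _ _).trans (le_of_eq ?_)
              rw [abs_mul, abs_mul _ (rhoT α β γ x), abs_of_pos hr]; ring
            have b4 := mul_le_mul_of_nonneg_left b3 (by positivity : 0 ≤ 2 * ε)
            have b5 := mul_le_mul_of_nonneg_left (add_le_add b1 b2) hr.le
            simp only [R]
            linarith
    rw [vR] at le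
    have : 2 * ε * |∫ x in Ttri, E v h x| ≤ 2 * ε * (ε * ((1 + M) / 2)) := by
      nlinarith
    exact le_of_mul_le_mul_left this (by positivity)
  have hzero : ∫ x in Ttri, E v h x = 0 := by
    have hlim : Tendsto (fun ε : ℝ => ε * ((1 + M) / 2)) (nhdsWithin 0 (Set.Ioi 0)) (nhds 0) := by
      have : Tendsto (fun ε : ℝ => ε * ((1 + M) / 2)) (nhds 0) (nhds (0 * ((1 + M) / 2))) :=
        (continuous_id.mul continuous_const).tendsto 0
      rw [zero_mul] at this
      exact this.mono_left nhdsWithin_le_nhds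
    have := ge_of_tendsto hlim (eventually_nhdsWithin_of_forall fun ε hε => bound ε hε)
    exact abs_eq_zero.1 (le_antisymm this (abs_nonneg _))
  have e2 : ∫ x in Ttri, E v h x =
      (∫ x in Ttri, rhoT α β γ x * bilPhi q11 q12 q12 q22 x (h x) (gradF u x)) +
      ((∫ x in Ttri, v x * c x * rhoT α β γ x) - ∫ x in Ttri, v x * f x * rhoT α β γ x) := by
    have a1 := integral_add I1 (I2.sub I3)
    have a2 := integral_sub I2 I3
    simp only [Pi.sub_apply] at a1
    rw [← a2, ← a1]
    congr 1; funext x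
    simp only [E, w]; ring
  have e3 : ∫ x in Ttri, (2 + x.1 ^ 2 + x.2 ^ 2) * v x * u x * rhoT α β γ x =
      ∫ x in Ttri, v x * c x * rhoT α β γ x := by
    congr 1; funext x; simp only [c]; ring
  rw [e3]
  linarith
end
end
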